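/- Fix integers d ≥ 2 and m ≥ 1 and a unit vector ψ ∈ ℂ^m ⊗ ℂ^d, and let σ_B := Tr_A(|ψ⟩⟨ψ|) be the reduced state on the ℂ^d factor. Consider bipartite single-call probabilistic protocols (S, S_ch), together with p ∈ ℝ, satisfying S ⋆ U = p · (1_m ⊗ U†)|ψ⟩⟨ψ|(1_m ⊗ U†)† for all U ∈ SU(d) (exact probabilistic unitary inversion on one part of the known bipartite pure state ψ). If d > 2, then every such protocol has p = 0. If d = 2, then the maximal p over all such protocols equals 1/(2 · λ_max(σ_B)), and it is attained. -/

import Mathlib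

open Matrix Kronecker BigOperators ComplexOrder

noncomputable section

/-- Entrywise complex conjugate `U̅` of a matrix. -/
def mconj {d : ℕ} (U : Matrix (Fin d) (Fin d) ℂ) : Matrix (Fin d) (Fin d) ℂ :=
  U.map (starRingEnd ℂ)

/-- Rank-one outer product `|v⟩⟨v|`. -/
def outer {n : Type*} (v : n → ℂ) : Matrix n n ℂ :=
  Matrix.vecMulVec v (star v)

/-- Choi vector `|U⟩⟩ = Σ_i e_i ⊗ U e_i`. -/
def choiVec {d : ℕ} (U : Matrix (Fin d) (Fin d) ℂ) : Fin d × Fin d → ℂ :=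
  fun p => U p.2 p.1

/-- `|U⟩⟩⟨⟨U|`. -/
def choiProj {d : ℕ} (U : Matrix (Fin d) (Fin d) ℂ) :
    Matrix (Fin d × Fin d) (Fin d × Fin d) ℂ :=
  outer (choiVec U)

/-- Partial trace over the first tensor factor. -/
def ptrLeft {α β : Type*} [Fintype α] (S : Matrix (α × β) (α × β) ℂ) :
    Matrix β β ℂ :=
  fun b b' => ∑ a, S (a, b) (a, b')

/-- Partial trace over the second (last) tensor factor. -/
def ptrRight {α β : Type*} [Fintype β] (S : Matrix (α × β) (α × β) ℂ) :
    Matrix α α ℂ :=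
  fun a a' => ∑ b, S (a, b) (a', b)

/-- Action `S ⋆ U := Tr_{IO}[ S · (|U̅⟩⟩⟨⟨U̅|_{IO} ⊗ 1_{AF}) ]` of a bipartite
single-call supermap `S` on `I ⊗ O ⊗ A ⊗ F`, applied to the unitary channel `U`. -/
def actB {d m : ℕ}
    (S : Matrix ((Fin d × Fin d) × (Fin m × Fin d)) ((Fin d × Fin d) × (Fin m × Fin d)) ℂ)
    (U : Matrix (Fin d) (Fin d) ℂ) : Matrix (Fin m × Fin d) (Fin m × Fin d) ℂ :=
  ptrLeft (S * (choiProj (mconj U) ⊗ₖ (1 : Matrix (Fin m × Fin d) (Fin m × Fin d) ℂ)))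

/-- A bipartite single-call probabilistic protocol (auxiliary output dimension `m`):
`0 ≤ S ≤ S_ch` with `Tr_{AF}(S_ch) = σ ⊗ 1_d`, `σ ≥ 0`, `Tr σ = 1`. -/
def IsProtocolB {d m : ℕ}
    (S Sch : Matrix ((Fin d × Fin d) × (Fin m × Fin d)) ((Fin d × Fin d) × (Fin m × Fin d)) ℂ) :
    Prop :=
  S.PosSemidef ∧ (Sch - S).PosSemidef ∧
    ∃ σ : Matrix (Fin d) (Fin d) ℂ, σ.PosSemidef ∧ σ.trace = 1 ∧
      ptrRight Sch = σ ⊗ₖ (1 : Matrix (Fin d) (Fin d) ℂ)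

/-- Largest eigenvalue of a matrix: the supremum of the real parts of its spectrum
(for a positive semidefinite matrix this is the maximal eigenvalue, i.e. the
operator norm). -/
def lamMax {n : ℕ} (M : Matrix (Fin n) (Fin n) ℂ) : ℝ :=
  sSup (Complex.re '' spectrum ℂ M)

/-!
An entire function on `M_d` that vanishes on the unitary group is zero, so a bilinear form `B` on
`M_d` with `B(U, U) = 0` for all `U ∈ SU(d)` is alternating. Write `S = ∑ₖ |sₖ⟩⟨sₖ|`. Exact
inversion makes every slice `L(U)` of `⟨⟨U̅|sₖ` proportional to `U†u` on `SU(d)`, where `u` is the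
corresponding slice of `ψ`. For `φ · u = 0` the form `φ · X L(Y)` is then alternating, which gives
`L(Y) = 0` whenever `φᵀ Y = 0`.

If `d > 2`, such a `φ ≠ 0` can be chosen with `φ · v = 0` for any prescribed `v`, so `L(v wᵀ) = 0`
for all `v, w`, i.e. `L = 0`. If `d = 2`, only `L(X) = c adj(X) u` survives. This forces
`S = p |s⟩⟨s|` for an explicit `s`, built from a singlet and a rotated copy of `ψ`, and such an `S`
extends to a channel exactly when `p λ_max(σ_B) ≤ 1/2`.
-/

theorem eq_zero_of_eq_zero_on_skewAdjoint {A E : Type*} [NormedAddCommGroup A] [NormedSpace ℂ A]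
    [StarAddMonoid A] [StarModule ℂ A] [NormedAddCommGroup E] [NormedSpace ℂ E]
    {g : A → E} (hg : AnalyticOnNhd ℂ g Set.univ) (h : ∀ a ∈ skewAdjoint A, g a = 0) : g = 0 := by
  funext x
  -- On this complex line through `x = line (-I)`, real parameters give skew-adjoint elements.
  let line : ℂ → A := fun z => Complex.I • (imaginaryPart x : A) + z • Complex.I • (realPart x : A)
  have line_real (t : ℝ) : g (line t) = 0 := by
    have hskew (a : selfAdjoint A) : Complex.I • (a : A) ∈ skewAdjoint A :=
      a.2.smul_mem_skewAdjoint Complex.conj_I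
    refine h _ (add_mem (hskew _) ?_)
    rw [Complex.coe_smul]
    exact skewAdjoint.smul_mem t (hskew _)
  have hline : AnalyticOnNhd ℂ (g ∘ line) Set.univ :=
    hg.comp (fun z _ => by fun_prop) (Set.mapsTo_univ _ _)
  have real_accumulates : ∃ᶠ z in nhdsWithin (0 : ℂ) {0}ᶜ, (g ∘ line) z = 0 := by
    have hreal : Filter.Tendsto ((↑) : ℝ → ℂ) (nhdsWithin 0 {0}ᶜ) (nhdsWithin 0 {0}ᶜ) :=
      Complex.continuous_ofReal.continuousWithinAt.tendsto_nhdsWithin (by simp [Set.MapsTo])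
    exact hreal.frequently (Filter.Frequently.of_forall line_real)
  have hx : line (-Complex.I) = x := by
    simp only [line, smul_smul, neg_mul, Complex.I_mul_I, neg_neg, one_smul]
    rw [add_comm, realPart_add_I_smul_imaginaryPart]
  calc g x = (g ∘ line) (-Complex.I) := by rw [Function.comp_apply, hx]
    _ = 0 := congrFun (hline.eq_of_frequently_eq analyticOnNhd_const real_accumulates) _

theorem eq_zero_of_eq_zero_on_unitary {A E : Type*} [NormedRing A] [NormedAlgebra ℂ A]
    [CompleteSpace A] [StarRing A] [ContinuousStar A] [StarModule ℂ A] [NormedAddCommGroup E]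
    [NormedSpace ℂ E] {f : A → E} (hf : AnalyticOnNhd ℂ f Set.univ)
    (h : ∀ u ∈ unitary A, f u = 0) : f = 0 := by
  have exp_eq_zero : f ∘ NormedSpace.exp = 0 := by
    refine eq_zero_of_eq_zero_on_skewAdjoint
      (hf.comp (fun x _ => NormedSpace.exp_analytic x) (Set.mapsTo_univ _ _)) fun a ha => ?_
    let +nondep : NormedAlgebra ℚ A := .restrictScalars ℚ ℂ A
    exact h _ (NormedSpace.exp_mem_unitary_of_mem_skewAdjoint ha)
  have exp_nhds : Filter.map NormedSpace.exp (nhds (0 : A)) = nhds 1 := by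
    simpa using
      (hasStrictFDerivAt_exp_zero (𝕂 := ℂ) (𝔸 := A)).map_nhds_eq_of_equiv (f' := .refl ℂ A)
  have near_one : f =ᶠ[nhds 1] 0 := by
    rw [Filter.EventuallyEq, ← exp_nhds, Filter.eventually_map]
    exact Filter.Eventually.of_forall (congrFun exp_eq_zero)
  exact hf.eq_of_eventuallyEq analyticOnNhd_const near_one

section SpecialUnitary

variable {n : Type*} [Fintype n] [DecidableEq n]

theorem exists_eq_smul_mem_specialUnitaryGroup {U : Matrix n n ℂ} (hU : U ∈ unitaryGroup n ℂ) :
    ∃ c : ℂ, ∃ V ∈ specialUnitaryGroup n ℂ, U = c • V := by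
  obtain hn | hn := isEmpty_or_nonempty n
  · exact ⟨1, 1, one_mem _, Subsingleton.elim _ _⟩
  have hcard : Fintype.card n ≠ 0 := Fintype.card_ne_zero
  obtain ⟨c, hc⟩ := IsAlgClosed.exists_pow_nat_eq U.det (Nat.pos_of_ne_zero hcard)
  have hdet : ‖U.det‖ = 1 := CStarRing.norm_of_mem_unitary (det_of_mem_unitary hU)
  have hnorm : ‖c‖ = 1 := by
    rwa [← pow_eq_one_iff_of_nonneg (norm_nonneg c) hcard, ← norm_pow, hc]
  have hc0 : c ≠ 0 := norm_ne_zero_iff.1 (by simp [hnorm])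
  have hcu : c⁻¹ ∈ unitary ℂ := by
    rw [Unitary.mem_iff_self_mul_star, RCLike.star_def, Complex.mul_conj']
    simp [hnorm]
  refine ⟨c, c⁻¹ • U, mem_specialUnitaryGroup_iff.2 ⟨Unitary.smul_mem_of_mem hcu hU, ?_⟩, ?_⟩
  · rw [det_smul, inv_pow, hc, inv_mul_cancel₀]
    exact norm_ne_zero_iff.1 (by simp [hdet])
  · rw [smul_smul, mul_inv_cancel₀ hc0, one_smul]

open scoped Matrix.Norms.L2Operator in
theorem isAlt_of_forall_mem_specialUnitaryGroup {B : LinearMap.BilinForm ℂ (Matrix n n ℂ)}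
    (h : ∀ U ∈ specialUnitaryGroup n ℂ, B U U = 0) : B.IsAlt := by
  have hB : AnalyticOnNhd ℂ (fun X => B X X) Set.univ := fun X _ =>
    (B.toContinuousBilinearMap.analyticAt_bilinear (X, X)).fun_comp
      (f := fun X => (X, X)) (by fun_prop)
  refine congrFun (eq_zero_of_eq_zero_on_unitary hB fun U hU => ?_)
  obtain ⟨c, V, hV, rfl⟩ := exists_eq_smul_mem_specialUnitaryGroup hU
  simp [h V hV]

theorem span_specialUnitaryGroup :
    Submodule.span ℂ (specialUnitaryGroup n ℂ : Set (Matrix n n ℂ)) = ⊤ := by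
  by_contra hspan
  obtain ⟨f, hf, hker⟩ := Submodule.exists_le_ker_of_lt_top _ (lt_top_iff_ne_top.2 hspan)
  have halt : (LinearMap.BilinForm.linMulLin f f).IsAlt :=
    isAlt_of_forall_mem_specialUnitaryGroup fun U hU => by
      simp [LinearMap.mem_ker.1 (hker (Submodule.subset_span hU))]
  exact hf (LinearMap.ext fun X => mul_self_eq_zero.1 (halt X))

theorem conjTranspose_eq_adjugate_of_mem_specialUnitaryGroup {U : Matrix n n ℂ}
    (hU : U ∈ specialUnitaryGroup n ℂ) : Uᴴ = U.adjugate := by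
  obtain ⟨hunitary, hdet⟩ := mem_specialUnitaryGroup_iff.1 hU
  calc Uᴴ = Uᴴ * (U * U.adjugate) := by rw [mul_adjugate, hdet, one_smul, mul_one]
    _ = U.adjugate := by
      rw [← mul_assoc, ← star_eq_conjTranspose, Unitary.star_mul_self_of_mem hunitary, one_mul]

end SpecialUnitary

section InverseDirection

variable {n : Type*} [Fintype n]

theorem exists_ne_zero_dotProduct_eq_zero_of_two_lt_card {K : Type*} [Field K]
    (hn : 2 < Fintype.card n) (u v : n → K) : ∃ φ : n → K, φ ≠ 0 ∧ φ ⬝ᵥ u = 0 ∧ φ ⬝ᵥ v = 0 := by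
  have hker : LinearMap.ker (mulVecLin (of ![u, v])) ≠ ⊥ :=
    LinearMap.ker_ne_bot_of_finrank_lt (by simpa using hn)
  obtain ⟨φ, hφ, hφ0⟩ := Submodule.exists_mem_ne_zero_of_ne_bot hker
  have hrow (i : Fin 2) : ![u, v] i ⬝ᵥ φ = 0 := congrFun (LinearMap.mem_ker.1 hφ) i
  exact ⟨φ, hφ0, by simpa [dotProduct_comm] using hrow 0, by simpa [dotProduct_comm] using hrow 1⟩

/-- The bilinear form `(X, Y) ↦ φ · X L(Y)` on square matrices. If `L U` is always a multiple of
`U⁻¹ u` and `φ · u = 0`, then it vanishes on the diagonal. -/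
def contraction (φ : n → ℂ) (L : Matrix n n ℂ →ₗ[ℂ] n → ℂ) :
    LinearMap.BilinForm ℂ (Matrix n n ℂ) :=
  LinearMap.mk₂ ℂ (fun X Y => (φ ᵥ* X) ⬝ᵥ L Y)
    (fun X X' Y => by rw [vecMul_add, add_dotProduct])
    (fun c X Y => by rw [vecMul_smul, smul_dotProduct])
    (fun X Y Y' => by rw [map_add, dotProduct_add])
    (fun c X Y => by rw [map_smul, dotProduct_smul])

theorem contraction_apply (φ : n → ℂ) (L : Matrix n n ℂ →ₗ[ℂ] n → ℂ) (X Y : Matrix n n ℂ) :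
    contraction φ L X Y = (φ ᵥ* X) ⬝ᵥ L Y :=
  rfl

theorem contraction_vecMulVec (φ v w : n → ℂ) (L : Matrix n n ℂ →ₗ[ℂ] n → ℂ) (Y : Matrix n n ℂ) :
    contraction φ L (vecMulVec v w) Y = (φ ⬝ᵥ v) * (w ⬝ᵥ L Y) := by
  rw [contraction_apply, vecMul_vecMulVec, smul_dotProduct, smul_eq_mul]

theorem apply_eq_zero_of_isAlt_contraction {φ : n → ℂ} {L : Matrix n n ℂ →ₗ[ℂ] n → ℂ}
    (halt : (contraction φ L).IsAlt) (hφ : φ ≠ 0) {Y : Matrix n n ℂ} (hY : φ ᵥ* Y = 0) :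
    L Y = 0 := by
  refine dotProduct_eq_zero _ fun w => ?_
  have hφφ : φ ⬝ᵥ star φ ≠ 0 := by rwa [Ne, dotProduct_self_star_eq_zero]
  refine (mul_eq_zero.1 ?_).resolve_left hφφ
  calc (φ ⬝ᵥ star φ) * (L Y ⬝ᵥ w) = contraction φ L (vecMulVec (star φ) w) Y := by
        rw [contraction_vecMulVec, dotProduct_comm (L Y)]
    _ = -contraction φ L Y (vecMulVec (star φ) w) := (halt.neg_eq _ _).symm
    _ = 0 := by rw [contraction_apply, hY, zero_dotProduct, neg_zero]

variable [DecidableEq n]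

theorem isAlt_contraction {φ u : n → ℂ} {L : Matrix n n ℂ →ₗ[ℂ] n → ℂ}
    (hL : ∀ U ∈ specialUnitaryGroup n ℂ, ∃ c : ℂ, L U = c • Uᴴ *ᵥ u) (hφu : φ ⬝ᵥ u = 0) :
    (contraction φ L).IsAlt := by
  refine isAlt_of_forall_mem_specialUnitaryGroup fun U hU => ?_
  obtain ⟨c, hc⟩ := hL U hU
  rw [contraction_apply, hc, dotProduct_smul, ← dotProduct_mulVec, mulVec_mulVec,
    ← star_eq_conjTranspose, Unitary.mul_star_self_of_mem (mem_specialUnitaryGroup_iff.1 hU).1,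
    one_mulVec, hφu, smul_zero]

theorem eq_zero_of_apply_eq_smul_conjTranspose_mulVec (hn : 2 < Fintype.card n) {u : n → ℂ}
    {L : Matrix n n ℂ →ₗ[ℂ] n → ℂ}
    (hL : ∀ U ∈ specialUnitaryGroup n ℂ, ∃ c : ℂ, L U = c • Uᴴ *ᵥ u) : L = 0 := by
  have vecMulVec_eq_zero (v w : n → ℂ) : L (vecMulVec v w) = 0 := by
    obtain ⟨φ, hφ, hφu, hφv⟩ := exists_ne_zero_dotProduct_eq_zero_of_two_lt_card hn u v
    refine apply_eq_zero_of_isAlt_contraction (isAlt_contraction hL hφu) hφ ?_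
    rw [vecMul_vecMulVec, hφv, zero_smul]
  refine (Matrix.stdBasis ℂ n n).ext fun ij => ?_
  rw [stdBasis_eq_single, single_eq_single_vecMulVec_single, vecMulVec_eq_zero,
    LinearMap.zero_apply]

end InverseDirection

theorem exists_eq_smul_of_dotProduct_apply_self_eq_zero {R : Type*} [CommRing R]
    {f : (Fin 2 → R) →ₗ[R] Fin 2 → R} (hf : ∀ w, w ⬝ᵥ f w = 0) :
    ∃ c : R, ∀ w, f w = c • ![w 1, -w 0] := by
  have h₀ := hf ![1, 0]
  have h₁ := hf ![0, 1]
  have h₀₁ := hf (![1, 0] + ![0, 1])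
  simp only [map_add, dotProduct, Fin.sum_univ_two, Pi.add_apply, cons_val_zero, cons_val_one,
    zero_mul, one_mul, add_zero, zero_add] at h₀ h₁ h₀₁
  have off_diagonal : f ![1, 0] 1 = -f ![0, 1] 0 := by linear_combination h₀₁ - h₀ - h₁
  refine ⟨f ![0, 1] 0, fun w => ?_⟩
  have hw : w = w 0 • ![1, 0] + w 1 • ![0, 1] := by ext i; fin_cases i <;> simp
  rw [hw, map_add, map_smul, map_smul]
  ext i
  fin_cases i
  · simp [h₀, mul_comm]
  · simp [h₁, off_diagonal, mul_comm]

theorem exists_apply_eq_smul_adjugate_mulVec {u : Fin 2 → ℂ} (hu : u ≠ 0)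
    {L : Matrix (Fin 2) (Fin 2) ℂ →ₗ[ℂ] Fin 2 → ℂ}
    (hL : ∀ U ∈ specialUnitaryGroup (Fin 2) ℂ, ∃ c : ℂ, L U = c • Uᴴ *ᵥ u) :
    ∃ c : ℂ, ∀ X, L X = c • X.adjugate *ᵥ u := by
  let φ : Fin 2 → ℂ := ![-u 1, u 0]
  have hφ : φ ≠ 0 := by
    contrapose! hu
    ext i
    fin_cases i
    · exact congrFun hu 1
    · exact neg_eq_zero.1 (congrFun hu 0)
  have halt : (contraction φ L).IsAlt :=
    isAlt_contraction hL (by simp [φ, dotProduct, Fin.sum_univ_two, mul_comm])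
  obtain ⟨v, hv⟩ : ∃ v, φ ⬝ᵥ v = 1 := by
    have hφφ : φ ⬝ᵥ star φ ≠ 0 := by rwa [Ne, dotProduct_self_star_eq_zero]
    exact ⟨(φ ⬝ᵥ star φ)⁻¹ • star φ, by rw [dotProduct_smul, smul_eq_mul, inv_mul_cancel₀ hφφ]⟩
  let f : (Fin 2 → ℂ) →ₗ[ℂ] Fin 2 → ℂ := L ∘ₗ vecMulVecBilin ℂ ℂ v
  obtain ⟨c, hc⟩ : ∃ c : ℂ, ∀ w, f w = c • ![w 1, -w 0] := by
    refine exists_eq_smul_of_dotProduct_apply_self_eq_zero fun w => ?_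
    have := halt (vecMulVec v w)
    rwa [contraction_vecMulVec, hv, one_mul] at this
  have hLf (X : Matrix (Fin 2) (Fin 2) ℂ) : L X = f (φ ᵥ* X) := by
    refine sub_eq_zero.1 ?_
    change L X - L (vecMulVec v (φ ᵥ* X)) = 0
    rw [← map_sub]
    refine apply_eq_zero_of_isAlt_contraction halt hφ ?_
    rw [vecMul_sub, vecMul_vecMulVec, hv, one_smul, sub_self]
  refine ⟨c, fun X => ?_⟩
  rw [hLf, hc, adjugate_fin_two]
  congr 1
  ext i
  fin_cases i <;> simp [φ, vecMul, mulVec, dotProduct, Fin.sum_univ_two] <;> ring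

section PartialTrace

variable {α β : Type*}

theorem ptrRight_add [Fintype β] (S T : Matrix (α × β) (α × β) ℂ) :
    ptrRight (S + T) = ptrRight S + ptrRight T := by
  ext a a'
  exact Finset.sum_add_distrib

theorem ptrRight_sub [Fintype β] (S T : Matrix (α × β) (α × β) ℂ) :
    ptrRight (S - T) = ptrRight S - ptrRight T := by
  ext a a'
  exact Finset.sum_sub_distrib _ _

theorem ptrRight_smul [Fintype β] (c : ℂ) (S : Matrix (α × β) (α × β) ℂ) :
    ptrRight (c • S) = c • ptrRight S := by
  ext a a'
  exact (Finset.mul_sum _ _ _).symm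

theorem ptrRight_kronecker [Fintype β] (A : Matrix α α ℂ) (B : Matrix β β ℂ) :
    ptrRight (A ⊗ₖ B) = B.trace • A := by
  ext a a'
  simp only [ptrRight, kroneckerMap_apply, ← Finset.mul_sum, Matrix.smul_apply, smul_eq_mul]
  exact mul_comm _ _

theorem ptrRight_eq_sum_submatrix [Fintype β] (S : Matrix (α × β) (α × β) ℂ) :
    ptrRight S = ∑ b, S.submatrix (·, b) (·, b) := by
  ext a a'
  simp only [ptrRight, Matrix.sum_apply, submatrix_apply]

theorem posSemidef_ptrRight [Fintype β] {S : Matrix (α × β) (α × β) ℂ} (hS : S.PosSemidef) :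
    (ptrRight S).PosSemidef := by
  rw [ptrRight_eq_sum_submatrix]
  exact posSemidef_sum _ fun b _ => hS.submatrix _

theorem ptrLeft_sub [Fintype α] (S T : Matrix (α × β) (α × β) ℂ) :
    ptrLeft (S - T) = ptrLeft S - ptrLeft T :=
  ptrRight_sub (S.submatrix Prod.swap Prod.swap) (T.submatrix Prod.swap Prod.swap)

theorem ptrLeft_smul [Fintype α] (c : ℂ) (S : Matrix (α × β) (α × β) ℂ) :
    ptrLeft (c • S) = c • ptrLeft S :=
  ptrRight_smul c (S.submatrix Prod.swap Prod.swap)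

theorem ptrLeft_kronecker [Fintype α] (A : Matrix α α ℂ) (B : Matrix β β ℂ) :
    ptrLeft (A ⊗ₖ B) = A.trace • B := by
  ext b b'
  simp only [ptrLeft, kroneckerMap_apply, ← Finset.sum_mul, Matrix.smul_apply, smul_eq_mul]
  rfl

theorem posSemidef_ptrLeft [Fintype α] {S : Matrix (α × β) (α × β) ℂ} (hS : S.PosSemidef) :
    (ptrLeft S).PosSemidef :=
  posSemidef_ptrRight (hS.submatrix Prod.swap)

theorem trace_ptrLeft [Fintype α] [Fintype β] (S : Matrix (α × β) (α × β) ℂ) :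
    (ptrLeft S).trace = S.trace := by
  simp only [trace, diag_apply, ptrLeft, Fintype.sum_prod_type]
  exact Finset.sum_comm

theorem trace_outer [Fintype α] (v : α → ℂ) : (outer v).trace = star v ⬝ᵥ v := by
  rw [outer, trace_vecMulVec, dotProduct_comm]

theorem posSemidef_outer [Finite α] (v : α → ℂ) : (outer v).PosSemidef :=
  posSemidef_vecMulVec_self_star v

end PartialTrace

theorem posSemidef_smul_iff_of_pos {n : Type*} {M : Matrix n n ℂ} {c : ℂ} (hc : 0 < c) :
    (c • M).PosSemidef ↔ M.PosSemidef := by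
  refine ⟨fun h => ?_, fun h => h.smul hc.le⟩
  simpa only [smul_smul, inv_mul_cancel₀ hc.ne', one_smul] using h.smul (inv_nonneg.2 hc.le)

section LargestEigenvalue

variable {n : ℕ} {M : Matrix (Fin n) (Fin n) ℂ}

theorem re_image_spectrum (hM : M.IsHermitian) : Complex.re '' spectrum ℂ M = spectrum ℝ M := by
  rw [hM.spectrum_eq_image_range, hM.spectrum_real_eq_range_eigenvalues, Set.image_image]
  simp

open scoped MatrixOrder Matrix.Norms.L2Operator in
theorem posSemidef_smul_one_sub_iff_lamMax_le [NeZero n] (hM : M.IsHermitian) {c : ℝ} :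
    ((c : ℂ) • 1 - M).PosSemidef ↔ lamMax M ≤ c := by
  have hne : (spectrum ℝ M).Nonempty := by
    rw [hM.spectrum_real_eq_range_eigenvalues]
    exact Set.range_nonempty _
  have hbdd : BddAbove (spectrum ℝ M) := by
    rw [hM.spectrum_real_eq_range_eigenvalues]
    exact (Set.finite_range _).bddAbove
  rw [lamMax, re_image_spectrum hM, csSup_le_iff hbdd hne, ← le_algebraMap_iff_spectrum_le,
    Matrix.le_iff, Algebra.algebraMap_eq_smul_one, Complex.coe_smul]

theorem lamMax_conj (V : unitaryGroup (Fin n) ℂ) (M : Matrix (Fin n) (Fin n) ℂ) :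
    lamMax ((V : Matrix (Fin n) (Fin n) ℂ) * M * (V : Matrix (Fin n) (Fin n) ℂ)ᴴ) = lamMax M := by
  rw [lamMax, ← star_eq_conjTranspose, Unitary.spectrum_star_right_conjugate, lamMax]

theorem lamMax_pos (hM : M.IsHermitian) (htr : 0 < M.trace) : 0 < lamMax M := by
  obtain rfl | hn := eq_or_ne n 0
  · simp at htr
  have : NeZero n := ⟨hn⟩
  contrapose! htr
  have hneg := (posSemidef_smul_one_sub_iff_lamMax_le hM (c := 0)).2 htr
  rw [Complex.ofReal_zero, zero_smul, zero_sub] at hneg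
  exact (by simpa using hneg.trace_nonneg : M.trace ≤ 0).not_gt

theorem posSemidef_smul_one_sub_smul_iff (hM : M.PosSemidef) (hpos : 0 < lamMax M) {r p : ℝ}
    (hr : 0 ≤ r) : ((r : ℂ) • 1 - (p : ℂ) • M).PosSemidef ↔ p * lamMax M ≤ r := by
  have : NeZero n := ⟨by rintro rfl; simp [lamMax, spectrum.of_subsingleton] at hpos⟩
  obtain hp | hp := le_or_gt p 0
  · have hnonneg : ((r : ℂ) • 1 - (p : ℂ) • M).PosSemidef := by
      rw [sub_eq_add_neg, ← neg_smul]
      exact (PosSemidef.one.smul (by simpa using hr)).add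
        (hM.smul (by exact_mod_cast neg_nonneg.2 hp))
    exact iff_of_true hnonneg ((mul_nonpos_of_nonpos_of_nonneg hp hpos.le).trans hr)
  have hscale : ((r : ℂ) • 1 - (p : ℂ) • M) = (p : ℂ) • (((r / p : ℝ) : ℂ) • 1 - M) := by
    rw [smul_sub, smul_smul, ← Complex.ofReal_mul, mul_div_cancel₀ _ hp.ne']
  rw [hscale, posSemidef_smul_iff_of_pos (by exact_mod_cast hp : (0 : ℂ) < p),
    posSemidef_smul_one_sub_iff_lamMax_le hM.isHermitian, le_div_iff₀' hp]

end LargestEigenvalue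

theorem mul_outer_mul_conjTranspose {m n : Type*} [Fintype n] (A : Matrix m n ℂ) (v : n → ℂ) :
    A * outer v * Aᴴ = outer (A *ᵥ v) := by
  rw [outer, mul_vecMulVec, vecMulVec_mul, ← star_mulVec, outer]

theorem outer_smul {n : Type*} (c : ℂ) (v : n → ℂ) : outer (c • v) = (c * star c) • outer v := by
  rw [outer, star_smul, smul_vecMulVec, vecMulVec_smul, smul_smul, outer]

theorem outer_ne_zero {n : Type*} {v : n → ℂ} (hv : v ≠ 0) : outer v ≠ 0 := by
  obtain ⟨i, hi⟩ := Function.ne_iff.1 hv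
  intro h
  exact mul_ne_zero hi (star_ne_zero.2 hi) (congrFun₂ h i i)

theorem exists_eq_sum_outer {n : Type*} [Finite n] {S : Matrix n n ℂ} (hS : S.PosSemidef) :
    ∃ (r : ℕ) (s : Fin r → n → ℂ), S = ∑ k, outer (s k) :=
  posSemidef_iff_eq_sum_vecMulVec.1 hS

theorem exists_eq_smul_of_sum_outer_eq_smul_outer {ι n : Type*} [Fintype ι] [Finite n]
    {v : ι → n → ℂ} {w : n → ℂ} {c : ℂ} (h : ∑ k, outer (v k) = c • outer w) (k : ι) :
    ∃ a : ℂ, v k = a • w := by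
  cases nonempty_fintype n
  have orthogonal {x : n → ℂ} (hx : star w ⬝ᵥ x = 0) : star (v k) ⬝ᵥ x = 0 := by
    have hquad (u : n → ℂ) : star x ⬝ᵥ outer u *ᵥ x = star (star u ⬝ᵥ x) * (star u ⬝ᵥ x) := by
      rw [outer, vecMulVec_mulVec, dotProduct_smul, ← star_dotProduct, op_smul_eq_mul]
    have hsum : ∑ k, star (star (v k) ⬝ᵥ x) * (star (v k) ⬝ᵥ x) = 0 := by
      calc _ = star x ⬝ᵥ (∑ k, outer (v k)) *ᵥ x := by
            rw [sum_mulVec, dotProduct_sum]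
            exact Finset.sum_congr rfl fun k _ => (hquad _).symm
        _ = 0 := by rw [h, smul_mulVec, dotProduct_smul, hquad, hx, mul_zero, smul_zero]
    have := (Fintype.sum_eq_zero_iff_of_nonneg fun k => star_mul_self_nonneg _).1 hsum
    simpa using congrFun this k
  let a : ℂ := (star w ⬝ᵥ v k) / (star w ⬝ᵥ w)
  refine ⟨a, sub_eq_zero.1 (dotProduct_star_self_eq_zero.1 ?_)⟩
  have hw : star w ⬝ᵥ (v k - a • w) = 0 := by
    rw [dotProduct_sub, dotProduct_smul, smul_eq_mul, sub_eq_zero]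
    obtain hw | hw := eq_or_ne (star w ⬝ᵥ w) 0
    · rw [dotProduct_star_self_eq_zero.1 hw]; simp
    · rw [div_mul_cancel₀ _ hw]
  rw [star_sub, star_smul, sub_dotProduct, smul_dotProduct, hw, orthogonal hw]
  simp

theorem one_kronecker_mulVec_apply {l n : Type*} [Fintype l] [DecidableEq l] [Fintype n]
    (V : Matrix n n ℂ) (ψ : l × n → ℂ) (a : l) (i : n) :
    (((1 : Matrix l l ℂ) ⊗ₖ V) *ᵥ ψ) (a, i) = (V *ᵥ fun j => ψ (a, j)) i := by
  simp [mulVec, dotProduct, Fintype.sum_prod_type, one_apply]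

theorem ptrLeft_outer {l n : Type*} [Fintype l] (ψ : l × n → ℂ) :
    ptrLeft (outer ψ) = ∑ a, outer fun j => ψ (a, j) := by
  ext j j'
  simp only [ptrLeft, outer, Matrix.sum_apply, vecMulVec_apply, Pi.star_apply]

theorem exists_slice_ne_zero {l n : Type*} {ψ : l × n → ℂ} (hψ : ψ ≠ 0) :
    ∃ a, (fun j => ψ (a, j)) ≠ 0 := by
  contrapose! hψ
  ext ⟨a, j⟩
  exact congrFun (hψ a) j

section Amplitude

/-- The linear map `U ↦ ⟨⟨U̅|s` attached to a vector `s` on `I ⊗ O ⊗ B`: it is the Kraus operator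
of the supermap `|s⟩⟨s|` applied to `U`. -/
def amplitude {n β : Type*} [Fintype n] (s : (n × n) × β → ℂ) : Matrix n n ℂ →ₗ[ℂ] β → ℂ where
  toFun U b := ∑ x, s (x, b) * U x.2 x.1
  map_add' U V := by ext b; simp [mul_add, Finset.sum_add_distrib]
  map_smul' c U := by ext b; simp [Finset.mul_sum, mul_left_comm]

theorem amplitude_apply {n β : Type*} [Fintype n] (s : (n × n) × β → ℂ) (U : Matrix n n ℂ) (b : β) :
    amplitude s U b = ∑ x, s (x, b) * U x.2 x.1 :=
  rfl

theorem amplitude_smul {n β : Type*} [Fintype n] (c : ℂ) (s : (n × n) × β → ℂ) :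
    amplitude (c • s) = c • amplitude s := by
  ext1 U
  ext b
  simp [amplitude_apply, Finset.mul_sum, mul_assoc]

theorem amplitude_injective {n β : Type*} [Fintype n] :
    Function.Injective (amplitude (n := n) (β := β)) := by
  classical
  intro s t hst
  ext ⟨⟨i, o⟩, b⟩
  simpa [amplitude_apply, Fintype.sum_prod_type, single_apply, ite_and] using
    congrFun (LinearMap.congr_fun hst (single o i 1)) b

variable {d m : ℕ}

theorem actB_apply
    (S : Matrix ((Fin d × Fin d) × (Fin m × Fin d)) ((Fin d × Fin d) × (Fin m × Fin d)) ℂ)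
    (U : Matrix (Fin d) (Fin d) ℂ) (b b' : Fin m × Fin d) :
    actB S U b b' = ∑ x, ∑ y, S (x, b) (y, b') * (star (U y.2 y.1) * U x.2 x.1) := by
  simp only [actB, ptrLeft, mul_apply]
  refine Finset.sum_congr rfl fun x _ => ?_
  rw [Fintype.sum_prod_type]
  refine Finset.sum_congr rfl fun y _ => ?_
  simp [choiProj, outer, choiVec, mconj, vecMulVec_apply, one_apply]

theorem actB_outer (s : (Fin d × Fin d) × (Fin m × Fin d) → ℂ) (U : Matrix (Fin d) (Fin d) ℂ) :
    actB (outer s) U = outer (amplitude s U) := by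
  ext b b'
  simp only [actB_apply, outer, vecMulVec_apply, Pi.star_apply, amplitude_apply, star_sum,
    star_mul', Finset.sum_mul_sum]
  exact Finset.sum_congr rfl fun x _ => Finset.sum_congr rfl fun y _ => by ring

theorem actB_sum {ι : Type*} [Fintype ι]
    (S : ι → Matrix ((Fin d × Fin d) × (Fin m × Fin d)) ((Fin d × Fin d) × (Fin m × Fin d)) ℂ)
    (U : Matrix (Fin d) (Fin d) ℂ) : actB (∑ k, S k) U = ∑ k, actB (S k) U := by
  ext b b'
  simp only [actB_apply, Matrix.sum_apply, Finset.sum_mul]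
  exact (Finset.sum_congr rfl fun x _ => Finset.sum_comm).trans Finset.sum_comm

theorem actB_smul (c : ℂ)
    (S : Matrix ((Fin d × Fin d) × (Fin m × Fin d)) ((Fin d × Fin d) × (Fin m × Fin d)) ℂ)
    (U : Matrix (Fin d) (Fin d) ℂ) : actB (c • S) U = c • actB S U := by
  ext b b'
  simp only [actB_apply, Matrix.smul_apply, smul_eq_mul, Finset.mul_sum, mul_assoc]

end Amplitude

section Inversion

variable {d m : ℕ} {ψ : Fin m × Fin d → ℂ} {p : ℝ}
  {S : Matrix ((Fin d × Fin d) × (Fin m × Fin d)) ((Fin d × Fin d) × (Fin m × Fin d)) ℂ}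

/-- The supermap `S` maps every `U ∈ SU(d)` to `p` times the pure state `(1 ⊗ U†)|ψ⟩`. -/
def InvertsWithProbability (ψ : Fin m × Fin d → ℂ)
    (S : Matrix ((Fin d × Fin d) × (Fin m × Fin d)) ((Fin d × Fin d) × (Fin m × Fin d)) ℂ)
    (p : ℝ) : Prop :=
  ∀ U : Matrix (Fin d) (Fin d) ℂ, U ∈ specialUnitaryGroup (Fin d) ℂ →
    actB S U = (p : ℂ) • (((1 : Matrix (Fin m) (Fin m) ℂ) ⊗ₖ Uᴴ) * outer ψ *
      ((1 : Matrix (Fin m) (Fin m) ℂ) ⊗ₖ Uᴴ)ᴴ)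

theorem InvertsWithProbability.actB_one (h : InvertsWithProbability ψ S p) :
    actB S 1 = (p : ℂ) • outer ψ := by
  simpa using h 1 (one_mem _)

theorem InvertsWithProbability.amplitude_eq_smul {ι : Type*} [Fintype ι]
    {s : ι → (Fin d × Fin d) × (Fin m × Fin d) → ℂ}
    (h : InvertsWithProbability ψ (∑ k, outer (s k)) p) (k : ι) {U : Matrix (Fin d) (Fin d) ℂ}
    (hU : U ∈ specialUnitaryGroup (Fin d) ℂ) :
    ∃ c : ℂ, amplitude (s k) U = c • ((1 : Matrix (Fin m) (Fin m) ℂ) ⊗ₖ Uᴴ) *ᵥ ψ := by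
  refine exists_eq_smul_of_sum_outer_eq_smul_outer (v := fun k => amplitude (s k) U) (c := p) ?_ k
  simp only [← actB_outer]
  rw [← actB_sum, h U hU, mul_outer_mul_conjTranspose]

/-- The component of `amplitude s` at the basis vector `a` of the auxiliary factor. -/
def sliceAmplitude (s : (Fin d × Fin d) × (Fin m × Fin d) → ℂ) (a : Fin m) :
    Matrix (Fin d) (Fin d) ℂ →ₗ[ℂ] Fin d → ℂ :=
  LinearMap.funLeft ℂ ℂ (Prod.mk a) ∘ₗ amplitude s

theorem sliceAmplitude_apply (s : (Fin d × Fin d) × (Fin m × Fin d) → ℂ) (a : Fin m)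
    (U : Matrix (Fin d) (Fin d) ℂ) (j : Fin d) :
    sliceAmplitude s a U j = amplitude s U (a, j) :=
  rfl

theorem sliceAmplitude_eq_smul {s : (Fin d × Fin d) × (Fin m × Fin d) → ℂ}
    {V U : Matrix (Fin d) (Fin d) ℂ} {c : ℂ}
    (h : amplitude s U = c • ((1 : Matrix (Fin m) (Fin m) ℂ) ⊗ₖ V) *ᵥ ψ) (a : Fin m) :
    sliceAmplitude s a U = c • V *ᵥ fun j => ψ (a, j) := by
  ext j
  rw [sliceAmplitude_apply, h, Pi.smul_apply, Pi.smul_apply, one_kronecker_mulVec_apply]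

theorem InvertsWithProbability.eq_zero (h : InvertsWithProbability ψ S p) (hd : 2 < d)
    (hψ : ψ ≠ 0) (hS : S.PosSemidef) : p = 0 := by
  obtain ⟨r, s, rfl⟩ := exists_eq_sum_outer hS
  have amplitude_eq_zero (k : Fin r) : amplitude (s k) 1 = 0 := by
    ext ⟨a, j⟩
    have hslice : sliceAmplitude (s k) a = 0 :=
      eq_zero_of_apply_eq_smul_conjTranspose_mulVec (by simpa using hd) fun U hU => by
        obtain ⟨c, hc⟩ := h.amplitude_eq_smul k hU
        exact ⟨c, sliceAmplitude_eq_smul hc a⟩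
    rw [← sliceAmplitude_apply, hslice, LinearMap.zero_apply]
    rfl
  have hp : (p : ℂ) • outer ψ = 0 := by
    rw [← h.actB_one, actB_sum]
    refine Finset.sum_eq_zero fun k _ => ?_
    rw [actB_outer, amplitude_eq_zero, outer, zero_vecMulVec]
  exact Complex.ofReal_eq_zero.1 ((smul_eq_zero.1 hp).resolve_right (outer_ne_zero hψ))

end Inversion

section Qubit

variable {m : ℕ} {ψ : Fin m × Fin 2 → ℂ} {p : ℝ}
  {S : Matrix ((Fin 2 × Fin 2) × (Fin m × Fin 2)) ((Fin 2 × Fin 2) × (Fin m × Fin 2)) ℂ}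

/-- The matrix `J` with `J A Jᵀ = adj Aᵀ` for all `2 × 2` matrices `A`. -/
def symplectic : Matrix (Fin 2) (Fin 2) ℂ :=
  !![0, 1; -1, 0]

theorem adjugate_eq_symplectic_mul (A : Matrix (Fin 2) (Fin 2) ℂ) :
    A.adjugate = symplecticᵀ * Aᵀ * symplectic := by
  rw [adjugate_fin_two, symplectic]
  ext i j
  fin_cases i <;> fin_cases j <;> simp [mul_apply, Fin.sum_univ_two]

/-- The unnormalised qubit protocol vector: `ψ` with its second factor rotated by `J` and fed into
`O`, together with a singlet on the factors `I` and `F`. -/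
def singletVec (ψ : Fin m × Fin 2 → ℂ) : (Fin 2 × Fin 2) × (Fin m × Fin 2) → ℂ :=
  fun x => symplectic x.1.1 x.2.2 * (symplectic *ᵥ fun j => ψ (x.2.1, j)) x.1.2

theorem amplitude_singletVec (ψ : Fin m × Fin 2 → ℂ) (U : Matrix (Fin 2) (Fin 2) ℂ) :
    amplitude (singletVec ψ) U = ((1 : Matrix (Fin m) (Fin m) ℂ) ⊗ₖ U.adjugate) *ᵥ ψ := by
  ext ⟨a, f⟩
  rw [one_kronecker_mulVec_apply, adjugate_eq_symplectic_mul, ← mulVec_mulVec, ← mulVec_mulVec]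
  simp only [amplitude_apply, singletVec, mulVec, dotProduct, transpose_apply,
    Fintype.sum_prod_type, Finset.mul_sum]
  exact Finset.sum_congr rfl fun i _ => Finset.sum_congr rfl fun o _ => by
    rw [Finset.sum_mul]; exact Finset.sum_congr rfl fun j _ => by ring

theorem exists_eq_smul_singletVec (hψ : ψ ≠ 0) {s : (Fin 2 × Fin 2) × (Fin m × Fin 2) → ℂ}
    (hs : ∀ U ∈ specialUnitaryGroup (Fin 2) ℂ,
      ∃ c : ℂ, amplitude s U = c • ((1 : Matrix (Fin m) (Fin m) ℂ) ⊗ₖ Uᴴ) *ᵥ ψ) :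
    ∃ c : ℂ, s = c • singletVec ψ := by
  obtain ⟨a, ha⟩ := exists_slice_ne_zero hψ
  obtain ⟨c, hc⟩ := exists_apply_eq_smul_adjugate_mulVec (L := sliceAmplitude s a) ha
    fun U hU => (hs U hU).imp fun c hc => sliceAmplitude_eq_smul hc a
  refine ⟨c, amplitude_injective (LinearMap.ext_on span_specialUnitaryGroup fun U hU => ?_)⟩
  obtain ⟨c', hc'⟩ := hs U hU
  have hne : Uᴴ *ᵥ (fun j => ψ (a, j)) ≠ 0 := by
    contrapose! ha
    calc (fun j => ψ (a, j)) = U *ᵥ Uᴴ *ᵥ fun j => ψ (a, j) := by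
          rw [mulVec_mulVec, ← star_eq_conjTranspose,
            Unitary.mul_star_self_of_mem (mem_specialUnitaryGroup_iff.1 hU).1, one_mulVec]
      _ = 0 := by rw [ha, mulVec_zero]
  have hcc : c' = c := by
    refine smul_left_injective ℂ hne ?_
    change c' • _ = c • _
    rw [← sliceAmplitude_eq_smul hc' a, hc, conjTranspose_eq_adjugate_of_mem_specialUnitaryGroup hU]
  rw [hc', hcc, amplitude_smul, LinearMap.smul_apply, amplitude_singletVec,
    conjTranspose_eq_adjugate_of_mem_specialUnitaryGroup hU]

theorem invertsWithProbability_smul_outer_singletVec (ψ : Fin m × Fin 2 → ℂ) (p : ℝ) :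
    InvertsWithProbability ψ ((p : ℂ) • outer (singletVec ψ)) p := by
  intro U hU
  rw [actB_smul, actB_outer, amplitude_singletVec, mul_outer_mul_conjTranspose,
    conjTranspose_eq_adjugate_of_mem_specialUnitaryGroup hU]

theorem InvertsWithProbability.eq_smul_outer_singletVec (h : InvertsWithProbability ψ S p)
    (hψ : ψ ≠ 0) (hS : S.PosSemidef) : S = (p : ℂ) • outer (singletVec ψ) := by
  obtain ⟨r, s, rfl⟩ := exists_eq_sum_outer hS
  have hs (k : Fin r) : ∃ c : ℂ, s k = c • singletVec ψ :=
    exists_eq_smul_singletVec hψ fun U hU => h.amplitude_eq_smul k hU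
  choose c hc using hs
  have hsum : ∑ k, outer (s k) = (∑ k, c k * star (c k)) • outer (singletVec ψ) := by
    simp only [hc, outer_smul, Finset.sum_smul]
  rw [hsum] at h ⊢
  have hone := h.actB_one
  rw [actB_smul, actB_outer, amplitude_singletVec, adjugate_one, one_kronecker_one, one_mulVec]
    at hone
  rw [smul_left_injective ℂ (outer_ne_zero hψ) hone]

theorem symplectic_mem_unitaryGroup : symplectic ∈ unitaryGroup (Fin 2) ℂ := by
  rw [mem_unitaryGroup_iff, star_eq_conjTranspose, symplectic]
  ext i j
  fin_cases i <;> fin_cases j <;> simp [mul_apply, Fin.sum_univ_two]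

/-- The reduced state of `ψ` conjugated by `J`: what `singletVec ψ` leaves on the factor `O`. -/
def rotatedState (ψ : Fin m × Fin 2 → ℂ) : Matrix (Fin 2) (Fin 2) ℂ :=
  symplectic * ptrLeft (outer ψ) * symplecticᴴ

theorem rotatedState_eq_sum_outer (ψ : Fin m × Fin 2 → ℂ) :
    rotatedState ψ = ∑ a, outer (symplectic *ᵥ fun j => ψ (a, j)) := by
  simp only [rotatedState, ptrLeft_outer, Finset.mul_sum, Finset.sum_mul,
    mul_outer_mul_conjTranspose]

theorem ptrRight_outer_singletVec (ψ : Fin m × Fin 2 → ℂ) :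
    ptrRight (outer (singletVec ψ)) = (1 : Matrix (Fin 2) (Fin 2) ℂ) ⊗ₖ rotatedState ψ := by
  ext ⟨i, o⟩ ⟨i', o'⟩
  have symplectic_rows :
      (1 : Matrix (Fin 2) (Fin 2) ℂ) i i' = ∑ f, symplectic i f * star (symplectic i' f) :=
    (congrFun₂ (mem_unitaryGroup_iff.1 symplectic_mem_unitaryGroup) i i').symm
  rw [kroneckerMap_apply, symplectic_rows, rotatedState_eq_sum_outer]
  simp only [ptrRight, outer, vecMulVec_apply, singletVec, Pi.star_apply, star_mul',
    Fintype.sum_prod_type, Matrix.sum_apply, Finset.sum_mul_sum]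
  rw [Finset.sum_comm]
  exact Finset.sum_congr rfl fun f _ => Finset.sum_congr rfl fun a _ => by ring

end Qubit

section OptimalProbability

variable {m : ℕ} {ψ : Fin m × Fin 2 → ℂ} {p : ℝ}

theorem posSemidef_rotatedState (ψ : Fin m × Fin 2 → ℂ) : (rotatedState ψ).PosSemidef :=
  (posSemidef_ptrLeft (posSemidef_outer ψ)).mul_mul_conjTranspose_same _

theorem lamMax_rotatedState (ψ : Fin m × Fin 2 → ℂ) :
    lamMax (rotatedState ψ) = lamMax (ptrLeft (outer ψ)) :=
  lamMax_conj ⟨symplectic, symplectic_mem_unitaryGroup⟩ _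

theorem lamMax_ptrLeft_outer_pos (hψ : ψ ≠ 0) : 0 < lamMax (ptrLeft (outer ψ)) := by
  refine lamMax_pos (posSemidef_ptrLeft (posSemidef_outer ψ)).isHermitian ?_
  rw [trace_ptrLeft, trace_outer]
  exact dotProduct_star_self_pos_iff.2 hψ

theorem posSemidef_smul_one_sub_smul_rotatedState_iff (hψ : ψ ≠ 0) {r : ℝ} (hr : 0 ≤ r) :
    ((r : ℂ) • 1 - (p : ℂ) • rotatedState ψ).PosSemidef ↔
      p * lamMax (ptrLeft (outer ψ)) ≤ r := by
  rw [posSemidef_smul_one_sub_smul_iff (posSemidef_rotatedState ψ), lamMax_rotatedState]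
  · rw [lamMax_rotatedState]
    exact lamMax_ptrLeft_outer_pos hψ
  · exact hr

theorem InvertsWithProbability.le_one_div_two_mul_lamMax
    {S Sch : Matrix ((Fin 2 × Fin 2) × (Fin m × Fin 2)) ((Fin 2 × Fin 2) × (Fin m × Fin 2)) ℂ}
    (h : InvertsWithProbability ψ S p) (hS : IsProtocolB S Sch) (hψ : ψ ≠ 0) :
    p ≤ 1 / (2 * lamMax (ptrLeft (outer ψ))) := by
  obtain ⟨hSpos, hSch, σ, -, hσ, hptr⟩ := hS
  have residual : ptrLeft (ptrRight (Sch - S)) =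
      ((1 : ℝ) : ℂ) • 1 - ((2 * p : ℝ) : ℂ) • rotatedState ψ := by
    rw [ptrRight_sub, hptr, h.eq_smul_outer_singletVec hψ hSpos, ptrRight_smul,
      ptrRight_outer_singletVec, ptrLeft_sub, ptrLeft_smul, ptrLeft_kronecker, ptrLeft_kronecker,
      hσ, trace_one, smul_smul]
    simp [mul_comm]
  have hpos := posSemidef_ptrLeft (posSemidef_ptrRight hSch)
  rw [residual, posSemidef_smul_one_sub_smul_rotatedState_iff hψ zero_le_one] at hpos
  rw [le_div_iff₀ (mul_pos two_pos (lamMax_ptrLeft_outer_pos hψ))]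
  linarith

theorem exists_isProtocolB_invertsWithProbability (hψ : star ψ ⬝ᵥ ψ = 1) :
    ∃ S Sch, IsProtocolB S Sch ∧
      InvertsWithProbability ψ S (1 / (2 * lamMax (ptrLeft (outer ψ)))) := by
  have hψ0 : ψ ≠ 0 := by rintro rfl; simp at hψ
  set p : ℝ := 1 / (2 * lamMax (ptrLeft (outer ψ))) with hp
  have hpos := lamMax_ptrLeft_outer_pos hψ0
  let S := (p : ℂ) • outer (singletVec ψ)
  let rest := ((1 / 2 : ℝ) : ℂ) • (1 : Matrix (Fin 2) (Fin 2) ℂ) - (p : ℂ) • rotatedState ψ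
  let fill := ((1 : Matrix (Fin 2) (Fin 2) ℂ) ⊗ₖ rest) ⊗ₖ outer ψ
  have hS : S.PosSemidef := (posSemidef_outer _).smul (by
    have : 0 ≤ p := by positivity
    exact_mod_cast this)
  have hrest : rest.PosSemidef := by
    refine (posSemidef_smul_one_sub_smul_rotatedState_iff hψ0 one_half_pos.le).2 (le_of_eq ?_)
    rw [hp]
    field_simp
  have hfill : fill.PosSemidef := (PosSemidef.one.kronecker hrest).kronecker (posSemidef_outer ψ)
  refine ⟨S, S + fill, ⟨hS, by rwa [add_sub_cancel_left], ((1 / 2 : ℝ) : ℂ) • 1, ?_, ?_, ?_⟩,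
    invertsWithProbability_smul_outer_singletVec ψ p⟩
  · exact PosSemidef.one.smul (by exact_mod_cast one_half_pos.le)
  · simp
  · calc ptrRight (S + fill)
        = (p : ℂ) • ((1 : Matrix (Fin 2) (Fin 2) ℂ) ⊗ₖ rotatedState ψ) + 1 ⊗ₖ rest := by
          rw [ptrRight_add, ptrRight_smul, ptrRight_outer_singletVec, ptrRight_kronecker,
            trace_outer, hψ, one_smul]
      _ = (((1 / 2 : ℝ) : ℂ) • 1) ⊗ₖ 1 := by
          rw [← kronecker_smul, ← kronecker_add, add_sub_cancel, kronecker_smul, smul_kronecker]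

end OptimalProbability

/-- **Probabilistic exact unitary inversion on part of a known bipartite pure state,
single call.** For `d > 2` every protocol implementing
`U ↦ p · (1_m ⊗ U†)|ψ⟩⟨ψ|(1_m ⊗ U†)†` for all `U ∈ SU(d)` has `p = 0`; for `d = 2`
the greatest achievable `p` is `1/(2 · λ_max(Tr_A |ψ⟩⟨ψ|))`, and it is attained. -/
theorem bipartite_inversion_single_call
    (d m : ℕ) (hd : 2 ≤ d) (hm : 1 ≤ m)
    (ψ : Fin m × Fin d → ℂ) (hψ : star ψ ⬝ᵥ ψ = 1) :
    (2 < d →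
      ∀ (S Sch : Matrix ((Fin d × Fin d) × (Fin m × Fin d))
          ((Fin d × Fin d) × (Fin m × Fin d)) ℂ) (p : ℝ),
        IsProtocolB S Sch →
        (∀ U : Matrix (Fin d) (Fin d) ℂ, U ∈ Matrix.specialUnitaryGroup (Fin d) ℂ →
          actB S U = (p : ℂ) •
            (((1 : Matrix (Fin m) (Fin m) ℂ) ⊗ₖ Uᴴ) * outer ψ *
              ((1 : Matrix (Fin m) (Fin m) ℂ) ⊗ₖ Uᴴ)ᴴ)) →
        p = 0) ∧
    (d = 2 →
      IsGreatest
        {p : ℝ |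
          ∃ S Sch : Matrix ((Fin d × Fin d) × (Fin m × Fin d))
              ((Fin d × Fin d) × (Fin m × Fin d)) ℂ,
            IsProtocolB S Sch ∧
            ∀ U : Matrix (Fin d) (Fin d) ℂ, U ∈ Matrix.specialUnitaryGroup (Fin d) ℂ →
              actB S U = (p : ℂ) •
                (((1 : Matrix (Fin m) (Fin m) ℂ) ⊗ₖ Uᴴ) * outer ψ *
                  ((1 : Matrix (Fin m) (Fin m) ℂ) ⊗ₖ Uᴴ)ᴴ)}
        (1 / (2 * lamMax (ptrLeft (outer ψ))))) := by
  have hψ0 : ψ ≠ 0 := by rintro rfl; simp at hψ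
  refine ⟨fun hd S Sch p hS hinv => ?_, ?_⟩
  · exact InvertsWithProbability.eq_zero hinv hd hψ0 hS.1
  · rintro rfl
    refine ⟨exists_isProtocolB_invertsWithProbability hψ, ?_⟩
    rintro p ⟨S, Sch, hS, hinv⟩
    exact InvertsWithProbability.le_one_div_two_mul_lamMax hinv hS hψ0
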